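/- (Spectral representation of the wave vector.) Let d ≥ 2 be an integer, n a prime, X = (ℤ/nℤ)^d, η = e^{2π√−1/n}, and let w_0, …, w_d be nonnegative reals with Σ w_i = 1; define κ_j = (n−1)^j C(d,j), ρ_i = Σ_{j=0}^d (w_j/κ_j) K_j(i), and the coin matrix C_{y,y'} = 2√((w_{|y|}/κ_{|y|})(w_{|y'|}/κ_{|y'|})) − δ_{y,y'}. Assume −1/(n−1) < ρ_j < 1 for all j ∈ {1, …, d}. For each such j, let μ_j^{(1)}, …, μ_j^{(n)} be the complex zeros (with multiplicity) of (−z)^n + 2ρ_j·Σ_{i=1}^{n−1}(−z)^i + 1, and assume they are pairwise distinct. Define the wave vector by ψ_{y,x}(0) = δ_{x,0}·√(w_{|y|}/κ_{|y|}) and ψ_{y,x}(t+1) = Σ_{y'∈X} C_{y,y'} ψ_{y',x⊕y}(t). Then for all t ∈ ℕ and all x, y ∈ X: ψ_{y,x}(t) = (1/n^d)·√(w_{|y|}/κ_{|y|})·Σ_{k=0}^{n−1} Σ_{l=0}^{n−1} (η^{lk}/n)·{ 1 + Σ_{j=1}^d K_j(|x ⊕ l·y|)·[ (−η^{−k})^t·(1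 − Σ_{i=1}^n 2c_j^{(i)}/(1 + η^k μ_j^{(i)})) + Σ_{i=1}^n 2c_j^{(i)}(μ_j^{(i)})^t/(1 + η^k μ_j^{(i)}) ] }, where c_j^{(i)} = [ (μ_j^{(i)})^n + (1−ρ_j)(μ_j^{(i)})^{n−1} − ρ_j(−1)^n ] / [ n(μ_j^{(i)})^n + (n − 2ρ_j(n−1))(μ_j^{(i)})^{n−1} − 2ρ_j(−1)^n Σ_{k=0}^{n−2}(−μ_j^{(i)})^k ] and l·y denotes the scalar multiple of y in (ℤ/nℤ)^d. -/

import Mathlib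

/-- The Krawtchouk polynomial value
`K_i(j) = Σ_{l=0}^{i} (-1)^l (n-1)^{i-l} C(j,l) C(d-j, i-l)`. -/
noncomputable def kraw (n d i j : ℕ) : ℝ :=
  ∑ l ∈ Finset.range (i + 1),
    (-1 : ℝ) ^ l * ((n - 1 : ℕ) : ℝ) ^ (i - l) * (j.choose l) * ((d - j).choose (i - l))

/-- `κ_j = (n-1)^j C(d,j)`. -/
noncomputable def kap (n d j : ℕ) : ℝ := ((n - 1 : ℕ) : ℝ) ^ j * (d.choose j)

/-- The coin matrix `C_{y,y'} = 2√((w_{|y|}/κ_{|y|})(w_{|y'|}/κ_{|y'|})) - δ_{y,y'}`. -/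
noncomputable def coin (n d : ℕ) (w : ℕ → ℝ) (y y' : Fin d → ZMod n) : ℝ :=
  2 * Real.sqrt ((w (hammingNorm y) / kap n d (hammingNorm y)) *
      (w (hammingNorm y') / kap n d (hammingNorm y'))) - if y = y' then 1 else 0

/-- The coefficient `c_j^{(i)}` of Theorem 5.1:
`c = (μ^n + (1-ρ)μ^{n-1} - ρ(-1)^n) /
  (nμ^n + (n - 2ρ(n-1))μ^{n-1} - 2ρ(-1)^n Σ_{k=0}^{n-2}(-μ)^k)`. -/
noncomputable def cCoef (n : ℕ) (ρ : ℝ) (μ : ℂ) : ℂ :=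
  (μ ^ n + (1 - (ρ : ℂ)) * μ ^ (n - 1) - (ρ : ℂ) * (-1 : ℂ) ^ n) /
    ((n : ℂ) * μ ^ n + ((n : ℂ) - 2 * (ρ : ℂ) * ((n : ℂ) - 1)) * μ ^ (n - 1) -
      2 * (ρ : ℂ) * (-1 : ℂ) ^ n * ∑ k ∈ Finset.range (n - 1), (-μ) ^ k)

/-!
On the Fourier component of a character `χ` of `X` one step of the walk is, up to the factor `χ`, a
rank-one perturbation of `-1`. Its eigenvectors are therefore the functions `1 / (1 + χ(-y) m)`
with `m` a solution of the secular equation `Σ_y a(y) / (1 + χ(-y) m) = 1/2`, where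
`a(y) = w_{|y|} / κ_{|y|}`. Since `n` is prime, the frequencies `ξ, 2ξ, …, (n - 1)ξ` have the same
Hamming weight, so the Fourier transform of `a` equals `ρ_{|ξ|}` at all of them; expanding in
geometric series modulo `χ ^ n = 1` turns the secular equation into the polynomial equation for the
`μ_j^{(i)}`. The coefficients `c_j^{(i)}` are the residues of a rational function with this
polynomial as denominator, and its partial fraction decomposition expands the initial state in
eigenvectors. In the resulting sum over `ξ`, the terms depend on `ξ` only through `|ξ|`, `ξ · x` and
`ξ · y`: the double sum over `k` and `l` is character inversion on `ℤ/nℤ` in the variable `ξ · y`,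
and the Krawtchouk values are the character sums over spheres.
-/

section FourierComponents

variable {G : Type*} [AddCommGroup G] [Fintype G]

/-- The action on coin states of one step of the quantum walk on `G` with coin
`2 s sᵀ - 1`, where `a = s²`, on the Fourier component with character `χ`. Coin states are divided
by `s` pointwise, so that only `a` enters and the initial state becomes the constant `1`. -/
noncomputable def fourierStep (a : G → ℂ) (χ : AddChar G ℂ) : Module.End ℂ (G → ℂ) where
  toFun g y := χ y * (2 * ∑ y', a y' * g y' - g y)
  map_add' g h := by
    ext y
    simp only [Pi.add_apply, mul_add, Finset.sum_add_distrib]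
    ring
  map_smul' c g := by
    ext y
    simp only [Pi.smul_apply, smul_eq_mul, RingHom.id_apply, mul_left_comm _ c, ← Finset.mul_sum]
    ring

lemma fourierStep_apply (a : G → ℂ) (χ : AddChar G ℂ) (g : G → ℂ) (y : G) :
    fourierStep a χ g y = χ y * (2 * ∑ y', a y' * g y' - g y) :=
  rfl

lemma sum_groverCoin_mul_addChar [DecidableEq G] (s g : G → ℂ) (χ : AddChar G ℂ) (x y : G) :
    ∑ y', (2 * s y * s y' - if y = y' then 1 else 0) * (χ (x + y) * (s y' * g y')) =
      χ x * (s y * fourierStep (s * s) χ g y) := by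
  have hterm (y' : G) : (2 * s y * s y' - if y = y' then 1 else 0) * (χ (x + y) * (s y' * g y')) =
      χ x * χ y * (2 * s y * (s y' * s y' * g y') - if y = y' then s y' * g y' else 0) := by
    rw [χ.map_add_eq_mul]
    split_ifs <;> ring
  simp only [hterm, ← Finset.mul_sum, Finset.sum_sub_distrib, Finset.sum_ite_eq, Finset.mem_univ,
    if_true, fourierStep_apply, Pi.mul_apply]
  ring

theorem walk_eq_sum_addChar [DecidableEq G] {s : G → ℂ} {ψ : ℕ → G → G → ℂ}
    (hψ0 : ∀ y x, ψ 0 y x = (if x = 0 then 1 else 0) * s y)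
    (hψ : ∀ t y x,
      ψ (t + 1) y x = ∑ y', (2 * s y * s y' - if y = y' then 1 else 0) * ψ t y' (x + y))
    (t : ℕ) (y x : G) :
    ψ t y x = 1 / Fintype.card G *
      ∑ χ : AddChar G ℂ, χ x * (s y * (fourierStep (s * s) χ ^ t) 1 y) := by
  induction t generalizing y x with
  | zero =>
    simp only [hψ0, pow_zero, Module.End.one_apply, Pi.one_apply, mul_one, ← Finset.sum_mul,
      AddChar.sum_apply_eq_ite]
    split_ifs <;> simp
  | succ t ih =>
    simp only [hψ, ih, pow_succ', Module.End.mul_apply, ← sum_groverCoin_mul_addChar]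
    rw [Finset.sum_comm, Finset.mul_sum]
    refine Finset.sum_congr rfl fun y' _ => ?_
    rw [mul_left_comm, Finset.mul_sum]

lemma fourierStep_one_one {a : G → ℂ} (ha : ∑ y, a y = 1) : fourierStep a 1 1 = 1 := by
  ext y
  simp only [fourierStep_apply, AddChar.one_apply, Pi.one_apply, mul_one, ha]
  norm_num

/-- The eigenvalue equation of a rank-one perturbation of the diagonal operator `-χ`. -/
lemma fourierStep_resolvent {a : G → ℂ} {χ : AddChar G ℂ} {m : ℂ}
    (hm : ∀ y, 1 + χ (-y) * m ≠ 0) (ha : ∑ y, a y * (1 + χ (-y) * m)⁻¹ = 1 / 2) :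
    fourierStep a χ (fun y => (1 + χ (-y) * m)⁻¹) = m • fun y => (1 + χ (-y) * m)⁻¹ := by
  ext y
  have hχ : χ y * χ (-y) = 1 := by rw [← χ.map_add_eq_mul, add_neg_cancel, χ.map_zero_eq_one]
  simp only [fourierStep_apply, ha, Pi.smul_apply, smul_eq_mul]
  field_simp [hm y]
  linear_combination m * hχ

theorem fourierStep_pow_one {ι : Type*} [Fintype ι] {a : G → ℂ} {χ : AddChar G ℂ} {c m : ι → ℂ}
    (hm : ∀ i y, 1 + χ (-y) * m i ≠ 0)
    (ha : ∀ i, ∑ y, a y * (1 + χ (-y) * m i)⁻¹ = 1 / 2)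
    (hc : ∀ y, ∑ i, c i / (1 + χ (-y) * m i) = 1) (t : ℕ) (y : G) :
    (fourierStep a χ ^ t) 1 y = ∑ i, c i * m i ^ t / (1 + χ (-y) * m i) := by
  have hpow : (fourierStep a χ ^ t) 1 =
      ∑ i, (c i * m i ^ t) • fun y => (1 + χ (-y) * m i)⁻¹ := by
    induction t with
    | zero =>
      ext y
      simpa [div_eq_mul_inv] using (hc y).symm
    | succ t ih =>
      rw [pow_succ', Module.End.mul_apply, ih, map_sum]
      refine Finset.sum_congr rfl fun i _ => ?_
      rw [map_smul, fourierStep_resolvent (hm i) (ha i), smul_smul, mul_assoc, ← pow_succ]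
  simp [hpow, div_eq_mul_inv]

end FourierComponents

lemma sum_range_eq_add_sum_Icc {M : Type*} [AddCommMonoid M] {n : ℕ} (hn : n ≠ 0) (f : ℕ → M) :
    ∑ i ∈ Finset.range n, f i = f 0 + ∑ i ∈ Finset.Icc 1 (n - 1), f i := by
  rw [Finset.sum_range_eq_add_Ico f (Nat.pos_of_ne_zero hn), ← Finset.Ico_add_one_right_eq_Icc,
    Nat.sub_one_add_one hn]

section SecularPolynomial

open Polynomial

variable {K : Type*} [Field K]

lemma one_add_mul_ne_zero_of_pow_ne_one {n : ℕ} {v m : K} (hv : v ^ n = 1) (hm : (-m) ^ n ≠ 1) :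
    1 + v * m ≠ 0 := by
  intro h
  have hvm : v * -m = 1 := by linear_combination -h
  apply hm
  simpa only [mul_pow, hv, one_mul, one_pow] using congrArg (· ^ n) hvm

lemma inv_one_add_mul_eq_geom_sum {n : ℕ} {v m : K} (hv : v ^ n = 1) (hm : (-m) ^ n ≠ 1) :
    (1 + v * m)⁻¹ = (∑ k ∈ Finset.range n, v ^ k * (-m) ^ k) / (1 - (-m) ^ n) := by
  have hgeom := mul_neg_geom_sum (v * -m) n
  simp only [mul_pow, hv, one_mul] at hgeom
  rw [eq_div_iff (sub_ne_zero.2 hm.symm),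
    inv_mul_eq_iff_eq_mul₀ (one_add_mul_ne_zero_of_pow_ne_one hv hm),
    ← hgeom]
  ring

theorem sum_eval_div_eval_derivative_nodal {ι : Type*} [Fintype ι] {v : ι → K}
    (hv : Function.Injective v) {p : K[X]} (hp : p.degree < Fintype.card ι) {x : K}
    (hx : ∀ i, x ≠ v i) :
    ∑ i, p.eval (v i) / (derivative (Lagrange.nodal Finset.univ v)).eval (v i) / (x - v i) =
      p.eval x / (Lagrange.nodal Finset.univ v).eval x := by
  classical
  have hinterp := congrArg (eval x) (Lagrange.eq_interpolate hv.injOn hp)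
  rw [Lagrange.eval_interpolate_not_at_node _ fun i _ => hx i] at hinterp
  rw [hinterp, mul_div_cancel_left₀ _ (Lagrange.eval_nodal_not_at_node fun i _ => hx i)]
  refine Finset.sum_congr rfl fun i hi => ?_
  rw [Lagrange.nodalWeight_eq_eval_derivative_nodal hi]
  ring

/-- The secular polynomial `X ^ n + 2 r (X + ⋯ + X ^ (n - 1)) + 1` of a Fourier component
on which the powers `1, …, n - 1` of the character all have mean `r`; its zeros are the negatives of
the eigenvalues. -/
noncomputable def secularPoly (n : ℕ) (r : K) : K[X] :=
  X ^ n + C (2 * r) * ∑ i ∈ Finset.Icc 1 (n - 1), X ^ i + 1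

/-- The numerator of the rational function with denominator `secularPoly n r` whose residues are the
coefficients `cCoef`. -/
noncomputable def residuePoly (n : ℕ) (r : K) : K[X] :=
  X ^ (n - 1) + C r * ∑ k ∈ Finset.range (n - 1), X ^ k

lemma eval_secularPoly (n : ℕ) (r u : K) :
    (secularPoly n r).eval u = u ^ n + 2 * r * ∑ i ∈ Finset.Icc 1 (n - 1), u ^ i + 1 := by
  simp [secularPoly, eval_finsetSum]

lemma eval_residuePoly (n : ℕ) (r u : K) :
    (residuePoly n r).eval u = u ^ (n - 1) + r * ∑ k ∈ Finset.range (n - 1), u ^ k := by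
  simp [residuePoly, eval_finsetSum]

lemma degree_residuePoly_lt {n : ℕ} (hn : n ≠ 0) (r : K) : (residuePoly n r).degree < n := by
  have hX {k : ℕ} (hk : k < n) : (X ^ k : K[X]) ∈ degreeLT K n := by
    simpa [mem_degreeLT] using hk
  rw [← mem_degreeLT, residuePoly, ← smul_eq_C_mul]
  refine add_mem (hX (by omega)) (Submodule.smul_mem _ _ (sum_mem fun k hk => hX ?_))
  have := Finset.mem_range.1 hk
  omega

lemma sum_Icc_one_pow {A : Type*} [CommSemiring A] (u : A) (n : ℕ) :
    ∑ i ∈ Finset.Icc 1 n, u ^ i = u * ∑ i ∈ Finset.range n, u ^ i := by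
  simp [← Finset.Ico_add_one_right_eq_Icc, Finset.sum_Ico_eq_sum_range, Finset.mul_sum, pow_add]

lemma sub_one_mul_eval_residuePoly {n : ℕ} (hn : n ≠ 0) (r u : K) :
    (u - 1) * (residuePoly n r).eval u = u ^ n - (1 - r) * u ^ (n - 1) - r := by
  rw [eval_residuePoly]
  linear_combination r * mul_geom_sum u (n - 1) + pow_sub_one_mul hn u

/-- Differentiate `(X - 1) * secularPoly n r = (X - 1) * (X ^ n + 1) + 2 * r * (X ^ n - X)`. -/
lemma sub_one_mul_eval_derivative_secularPoly {n : ℕ} (hn : n ≠ 0) (r u : K) :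
    (u - 1) * (derivative (secularPoly n r)).eval u =
      n * u ^ n - (n - 2 * r * (n - 1)) * u ^ (n - 1) -
        2 * r * ∑ k ∈ Finset.range (n - 1), u ^ k := by
  have hpoly : (X - 1) * secularPoly n r = (X - 1) * (X ^ n + 1) + C (2 * r) * (X ^ n - X) := by
    rw [secularPoly, sum_Icc_one_pow]
    linear_combination C (2 * r) * X * mul_geom_sum (X : K[X]) (n - 1) +
      C (2 * r) * pow_sub_one_mul hn (X : K[X])
  have hderiv := congrArg (fun p => (derivative p).eval u) hpoly
  simp only [derivative_mul, derivative_sub, derivative_add, derivative_X, derivative_one,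
    derivative_C, derivative_X_pow, eval_add, eval_mul, eval_sub, eval_X, eval_one, eval_C,
    eval_pow, eval_zero, eval_natCast, map_natCast, eval_secularPoly, sum_Icc_one_pow] at hderiv
  linear_combination hderiv - 2 * r * mul_geom_sum u (n - 1) + n * pow_sub_one_mul hn u

lemma pow_ne_one_of_eval_secularPoly_eq_zero [NeZero (2 : K)] {n : ℕ} (hn : n ≠ 0) {r u : K}
    (hr : r ≠ 1) (hr' : r * (n - 1) ≠ -1) (hu : (secularPoly n r).eval u = 0) : u ^ n ≠ 1 := by
  intro hun
  have h2 : (2 : K) ≠ 0 := two_ne_zero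
  have hsecular : 1 + r * ∑ i ∈ Finset.Icc 1 (n - 1), u ^ i = 0 := by
    rw [eval_secularPoly, hun] at hu
    exact (mul_eq_zero.1 (show 2 * _ = (0 : K) by linear_combination hu)).resolve_left h2
  have hgeom := mul_neg_geom_sum u n
  rw [hun, sub_self, sum_range_eq_add_sum_Icc hn, pow_zero] at hgeom
  rcases mul_eq_zero.1 hgeom with hu1 | hsum
  · obtain rfl : u = 1 := (sub_eq_zero.1 hu1).symm
    apply hr'
    simp only [one_pow, Finset.sum_const, Nat.card_Icc, Nat.add_sub_cancel, nsmul_one,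
      Nat.cast_pred (Nat.pos_of_ne_zero hn)] at hsecular
    linear_combination hsecular
  · apply hr
    linear_combination r * hsum - hsecular

theorem sum_mul_inv_one_add_mul_eq_half [NeZero (2 : K)] {Y : Type*} [Fintype Y] {n : ℕ}
    (hn : n ≠ 0) {a v : Y → K} {r m : K} (hv : ∀ y, v y ^ n = 1) (ha : ∑ y, a y = 1)
    (hr : ∀ k ∈ Finset.Icc 1 (n - 1), ∑ y, a y * v y ^ k = r)
    (hm : (-m) ^ n ≠ 1) (hroot : (secularPoly n r).eval (-m) = 0) :
    ∑ y, a y * (1 + v y * m)⁻¹ = 1 / 2 := by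
  have hnum : ∑ y, a y * ∑ k ∈ Finset.range n, v y ^ k * (-m) ^ k =
      1 + r * ∑ k ∈ Finset.Icc 1 (n - 1), (-m) ^ k := by
    simp only [Finset.mul_sum, ← mul_assoc]
    rw [Finset.sum_comm]
    simp only [← Finset.sum_mul]
    rw [sum_range_eq_add_sum_Icc hn]
    simp only [pow_zero, mul_one, ha]
    exact congrArg (1 + ·) (Finset.sum_congr rfl fun k hk => by rw [hr k hk])
  simp only [inv_one_add_mul_eq_geom_sum (hv _) hm, ← mul_div_assoc, ← Finset.sum_div, hnum]
  rw [div_eq_div_iff (sub_ne_zero.2 hm.symm) two_ne_zero]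
  rw [eval_secularPoly] at hroot
  linear_combination hroot

end SecularPolynomial

section Coefficients

open Polynomial

lemma secularPoly_eq_nodal_neg {n : ℕ} {r : ℂ} {μ : Fin n → ℂ}
    (hμ : ∀ z : ℂ, (-z) ^ n + 2 * r * ∑ i ∈ Finset.Icc 1 (n - 1), (-z) ^ i + 1 =
      (-1) ^ n * ∏ i, (z - μ i)) :
    secularPoly n r = Lagrange.nodal Finset.univ (-μ) := by
  refine Polynomial.funext fun u => ?_
  have hprod : (-1) ^ n * ∏ i, (-u - μ i) = ∏ i, (u - (-μ) i) := by
    have hneg := Finset.prod_neg (s := Finset.univ) fun i => -u - μ i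
    rw [Finset.card_univ, Fintype.card_fin] at hneg
    exact hneg.symm.trans (Finset.prod_congr rfl fun i _ => by rw [Pi.neg_apply]; ring)
  rw [eval_secularPoly, Lagrange.eval_nodal, ← hprod, ← hμ, neg_neg]

lemma eval_secularPoly_neg_eq_zero {n : ℕ} {r : ℂ} {μ : Fin n → ℂ}
    (hμ : secularPoly n r = Lagrange.nodal Finset.univ (-μ)) (i : Fin n) :
    (secularPoly n r).eval (-μ i) = 0 := by
  rw [hμ, ← Pi.neg_apply, Lagrange.eval_nodal_at_node (Finset.mem_univ i)]

lemma neg_pow_ne_one_of_secularPoly_eq_nodal {n : ℕ} {r : ℝ} {μ : Fin n → ℂ} (hn : 1 < n)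
    (hlo : -(1 / ((n : ℝ) - 1)) < r) (hhi : r < 1)
    (hμ : secularPoly n (r : ℂ) = Lagrange.nodal Finset.univ (-μ)) (i : Fin n) :
    (-μ i) ^ n ≠ 1 := by
  have hn1 : (0 : ℝ) < n - 1 := sub_pos.2 (Nat.one_lt_cast.2 hn)
  have hlo' : -1 < r * (n - 1) := by rwa [← neg_div, div_lt_iff₀ hn1] at hlo
  refine pow_ne_one_of_eval_secularPoly_eq_zero (by omega) (mod_cast hhi.ne) ?_
    (eval_secularPoly_neg_eq_zero hμ i)
  exact_mod_cast hlo'.ne'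

lemma cCoef_eq_div_derivative {n : ℕ} (hn : n ≠ 0) (r : ℝ) {m : ℂ} (hm : 1 + m ≠ 0) :
    cCoef n r m =
      (residuePoly n (r : ℂ)).eval (-m) / (derivative (secularPoly n (r : ℂ))).eval (-m) := by
  obtain ⟨u, rfl⟩ : ∃ u, m = -u := ⟨-m, (neg_neg m).symm⟩
  have hscale : (-1) ^ n * (u - 1) ≠ 0 :=
    mul_ne_zero (pow_ne_zero n (neg_ne_zero.2 one_ne_zero)) fun h => hm (by linear_combination -h)
  have hneg : (-1 : ℂ) ^ (n - 1) = -(-1) ^ n := by rw [← pow_sub_one_mul hn (-1 : ℂ)]; ring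
  rw [neg_neg, ← mul_div_mul_left _ _ hscale, mul_assoc, mul_assoc,
    sub_one_mul_eval_residuePoly hn, sub_one_mul_eval_derivative_secularPoly hn, cCoef, neg_neg,
    neg_pow u n, neg_pow u (n - 1), hneg]
  congr 1 <;> ring

theorem sum_cCoef_div_eq_one {n : ℕ} (hn : n ≠ 0) {r : ℝ} {μ : Fin n → ℂ}
    (hμ : secularPoly n (r : ℂ) = Lagrange.nodal Finset.univ (-μ)) (hinj : Function.Injective μ)
    (hpow : ∀ i, (-μ i) ^ n ≠ 1) {v : ℂ} (hv : v ^ n = 1) :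
    ∑ i, 2 * cCoef n r (μ i) / (1 + v * μ i) = 1 := by
  have hv0 : v ≠ 0 := by rintro rfl; simp [hn] at hv
  have hne (i : Fin n) : v⁻¹ ≠ (-μ) i := fun h => hpow i (by simp [← Pi.neg_apply, ← h, hv])
  have hpf := sum_eval_div_eval_derivative_nodal (v := -μ) (neg_injective.comp hinj)
    (by simpa using degree_residuePoly_lt hn (r : ℂ)) hne
  rw [← hμ] at hpf
  have hsecular : (secularPoly n (r : ℂ)).eval v⁻¹ ≠ 0 := by
    rw [hμ]
    exact Lagrange.eval_nodal_not_at_node fun i _ => hne i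
  have hhalf : 2 * v⁻¹ * (residuePoly n (r : ℂ)).eval v⁻¹ = (secularPoly n (r : ℂ)).eval v⁻¹ := by
    rw [eval_secularPoly, eval_residuePoly, sum_Icc_one_pow, mul_add, mul_assoc 2, ← pow_succ',
      Nat.sub_one_add_one hn, inv_pow, hv]
    ring
  calc ∑ i, 2 * cCoef n r (μ i) / (1 + v * μ i)
      = 2 * v⁻¹ * ∑ i, cCoef n r (μ i) / (v⁻¹ - (-μ) i) := by
        rw [Finset.mul_sum]
        refine Finset.sum_congr rfl fun i _ => ?_
        have hdenom : v⁻¹ - (-μ) i = v⁻¹ * (1 + v * μ i) := by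
          rw [mul_add, inv_mul_cancel_left₀ hv0, mul_one, Pi.neg_apply, sub_neg_eq_add]
        rw [hdenom, ← mul_div_assoc, mul_right_comm, mul_comm v⁻¹,
          mul_div_mul_right _ _ (inv_ne_zero hv0)]
    _ = 2 * v⁻¹ * ((residuePoly n (r : ℂ)).eval v⁻¹ / (secularPoly n (r : ℂ)).eval v⁻¹) := by
        have hμ1 (i : Fin n) : 1 + μ i ≠ 0 := by
          simpa using one_add_mul_ne_zero_of_pow_ne_one (one_pow n) (hpow i)
        simp only [cCoef_eq_div_derivative hn r (hμ1 _), ← hpf, Pi.neg_apply]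
    _ = 1 := by rw [← mul_div_assoc, hhalf, div_self hsecular]

end Coefficients

section HammingCharacters

open Polynomial

lemma coeff_one_add_C_mul_X_pow {A : Type*} [CommSemiring A] (a : A) (m k : ℕ) :
    ((1 + C a * X) ^ m).coeff k = a ^ k * m.choose k := by
  have hcomp : (1 + C a * X) ^ m = ((1 + X) ^ m).comp (C a * X) := by simp
  rw [hcomp, comp_C_mul_X_coeff, coeff_one_add_X_pow, mul_comm]

lemma coeff_pow_mul_pow_eq_kraw {d s : ℕ} (n j : ℕ) :
    ((1 + C (-1 : ℂ) * X) ^ s * (1 + C ((n - 1 : ℕ) : ℂ) * X) ^ (d - s)).coeff j =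
      (kraw n d j s : ℂ) := by
  rw [coeff_mul, Finset.Nat.sum_antidiagonal_eq_sum_range_succ_mk, kraw, Complex.ofReal_sum]
  refine Finset.sum_congr rfl fun l _ => ?_
  rw [coeff_one_add_C_mul_X_pow, coeff_one_add_C_mul_X_pow]
  push_cast
  ring

variable {R ι : Type*} [CommRing R]

section Coordinate

variable [Fintype R]

lemma sum_addChar_mul_X_pow [DecidableEq R] {e : AddChar R ℂ} (he : e.IsPrimitive) (a : R) :
    ∑ b, C (e (b * a)) * (X : ℂ[X]) ^ (if b ≠ 0 then 1 else 0) =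
      if a ≠ 0 then 1 + C (-1) * X else 1 + C ((Fintype.card R - 1 : ℕ) : ℂ) * X := by
  have hterm (b : R) : C (e (b * a)) * (X : ℂ[X]) ^ (if b ≠ 0 then 1 else 0) =
      C (e (b * a)) * X + if b = 0 then 1 - X else 0 := by
    by_cases hb : b = 0 <;> simp [hb]
  simp only [hterm, Finset.sum_add_distrib, ← Finset.sum_mul, ← map_sum,
    AddChar.sum_mulShift a he, Finset.sum_ite_eq', Finset.mem_univ, if_true]
  by_cases ha : a = 0
  · simp only [ha, if_true, ne_eq, not_true_eq_false, if_false, Nat.cast_pred Fintype.card_pos,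
      map_sub, map_one]
    ring
  · simp [ha, sub_eq_add_neg]

lemma sum_sum_addChar_mul_eq {e : AddChar R ℂ} (he : e.IsPrimitive) (a : R) (f : R → ℂ) :
    ∑ b, ∑ c, e (c * b) / Fintype.card R * (e (c * a) * f b) = f (-a) := by
  classical
  have hcard : (Fintype.card R : ℂ) ≠ 0 := Nat.cast_ne_zero.2 Fintype.card_ne_zero
  have hterm (b c : R) : e (c * b) / Fintype.card R * (e (c * a) * f b) =
      e (c * (b + a)) * (f b / Fintype.card R) := by
    rw [mul_add, e.map_add_eq_mul]
    ring
  simp only [hterm, ← Finset.sum_mul, AddChar.sum_mulShift _ he, ite_mul, Nat.cast_ite,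
    Nat.cast_zero, zero_mul, mul_div_cancel₀ _ hcard, add_eq_zero_iff_eq_neg, Finset.sum_ite_eq',
    Finset.mem_univ, if_true]

end Coordinate

variable [Fintype ι]

/-- The character `x ↦ e (ξ · x)` of `R ^ ι` attached to `ξ` and to a character `e` of `R`; for
primitive `e` this identifies `R ^ ι` with its dual group. -/
def dotAddChar (e : AddChar R ℂ) (ξ : ι → R) : AddChar (ι → R) ℂ where
  toFun x := e (ξ ⬝ᵥ x)
  map_zero_eq_one' := by rw [dotProduct_zero, e.map_zero_eq_one]
  map_add_eq_mul' x y := by rw [dotProduct_add, e.map_add_eq_mul]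

lemma dotAddChar_apply (e : AddChar R ℂ) (ξ x : ι → R) : dotAddChar e ξ x = e (ξ ⬝ᵥ x) :=
  rfl

lemma dotAddChar_comm (e : AddChar R ℂ) (ξ x : ι → R) : dotAddChar e ξ x = dotAddChar e x ξ := by
  rw [dotAddChar_apply, dotAddChar_apply, dotProduct_comm]

lemma dotAddChar_apply_eq_prod (e : AddChar R ℂ) (ξ x : ι → R) :
    dotAddChar e ξ x = ∏ i, e (ξ i * x i) :=
  congrArg Additive.toMul (map_sum e.toAddMonoidHom (fun i => ξ i * x i) Finset.univ)

lemma dotAddChar_zero (e : AddChar R ℂ) : dotAddChar e (0 : ι → R) = 1 := by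
  ext x
  rw [dotAddChar_apply, zero_dotProduct, e.map_zero_eq_one, AddChar.one_apply]

lemma dotAddChar_injective {e : AddChar R ℂ} (he : e.IsPrimitive) :
    Function.Injective (dotAddChar e : (ι → R) → AddChar (ι → R) ℂ) := by
  classical
  intro ξ ζ h
  ext i
  refine AddChar.to_mulShift_inj_of_isPrimitive he (DFunLike.ext _ _ fun r => ?_)
  simpa [dotAddChar_apply] using DFunLike.congr_fun h (Pi.single i r)

lemma dotAddChar_bijective [Finite R] {e : AddChar R ℂ} (he : e.IsPrimitive) :
    Function.Bijective (dotAddChar e : (ι → R) → AddChar (ι → R) ℂ) := by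
  classical
  have := Fintype.ofFinite R
  exact (Fintype.bijective_iff_injective_and_card _).2
    ⟨dotAddChar_injective he, AddChar.card_eq.symm⟩

variable [Fintype R] [DecidableEq R] [DecidableEq ι]

/-- The sum factors over the coordinates. -/
lemma sum_dotAddChar_mul_X_pow {e : AddChar R ℂ} (he : e.IsPrimitive) (z : ι → R) :
    ∑ ξ : ι → R, C (dotAddChar e ξ z) * (X : ℂ[X]) ^ hammingNorm ξ =
      (1 + C (-1) * X) ^ hammingNorm z *
        (1 + C ((Fintype.card R - 1 : ℕ) : ℂ) * X) ^ (Fintype.card ι - hammingNorm z) := by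
  classical
  have hfactor (ξ : ι → R) : C (dotAddChar e ξ z) * (X : ℂ[X]) ^ hammingNorm ξ =
      ∏ i, C (e (ξ i * z i)) * X ^ (if ξ i ≠ 0 then 1 else 0) := by
    rw [Finset.prod_mul_distrib, Finset.prod_pow_eq_pow_sum, ← map_prod,
      ← dotAddChar_apply_eq_prod, hammingNorm, Finset.card_filter]
  have hcard : Finset.card {i | ¬z i ≠ 0} = Fintype.card ι - hammingNorm z := by
    rw [← Finset.compl_filter, Finset.card_compl, hammingNorm]
  simp only [hfactor]
  rw [← Fintype.prod_sum fun i b => C (e (b * z i)) * (X : ℂ[X]) ^ (if b ≠ 0 then 1 else 0)]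
  simp only [sum_addChar_mul_X_pow he]
  rw [Finset.prod_ite, Finset.prod_const, Finset.prod_const, hcard, hammingNorm]

theorem kraw_eq_sum_dotAddChar {e : AddChar R ℂ} (he : e.IsPrimitive) (j : ℕ) (z : ι → R) :
    (kraw (Fintype.card R) (Fintype.card ι) j (hammingNorm z) : ℂ) =
      ∑ ξ : ι → R, if hammingNorm ξ = j then dotAddChar e ξ z else 0 := by
  have hcoeff := congrArg (coeff · j) (sum_dotAddChar_mul_X_pow he z)
  simp only [finsetSum_coeff, coeff_C_mul, coeff_X_pow, coeff_pow_mul_pow_eq_kraw, mul_ite, mul_one,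
    mul_zero] at hcoeff
  simp only [← hcoeff, eq_comm (a := j)]

theorem sum_kraw_mul_eq_sum_dotAddChar {e : AddChar R ℂ} (he : e.IsPrimitive) (f : ℕ → ℂ)
    (z : ι → R) :
    ∑ j ∈ Finset.range (Fintype.card ι + 1),
        (kraw (Fintype.card R) (Fintype.card ι) j (hammingNorm z) : ℂ) * f j =
      ∑ ξ : ι → R, dotAddChar e ξ z * f (hammingNorm ξ) := by
  have hmem (ξ : ι → R) : hammingNorm ξ ∈ Finset.range (Fintype.card ι + 1) :=
    Finset.mem_range_succ_iff.2 hammingNorm_le_card_fintype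
  simp only [kraw_eq_sum_dotAddChar he, Finset.sum_mul, ite_mul, zero_mul]
  rw [Finset.sum_comm]
  exact Finset.sum_congr rfl fun ξ _ => by rw [Finset.sum_ite_eq, if_pos (hmem ξ)]

theorem sum_sum_addChar_mul_sum_kraw {e : AddChar R ℂ} (he : e.IsPrimitive) (f : ℕ → ℂ → ℂ)
    (x y : ι → R) :
    ∑ b, ∑ c, e (c * b) / Fintype.card R *
        ∑ j ∈ Finset.range (Fintype.card ι + 1),
          (kraw (Fintype.card R) (Fintype.card ι) j (hammingNorm (x + c • y)) : ℂ) * f j (e b) =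
      ∑ ξ, dotAddChar e ξ x * f (hammingNorm ξ) (dotAddChar e ξ (-y)) := by
  have hterm (b c : R) (ξ : ι → R) :
      e (c * b) / Fintype.card R * (dotAddChar e ξ (x + c • y) * f (hammingNorm ξ) (e b)) =
        dotAddChar e ξ x *
          (e (c * b) / Fintype.card R * (e (c * ξ ⬝ᵥ y) * f (hammingNorm ξ) (e b))) := by
    rw [AddChar.map_add_eq_mul, dotAddChar_apply e ξ (c • y), dotProduct_smul, smul_eq_mul]
    ring
  simp only [sum_kraw_mul_eq_sum_dotAddChar he, Finset.mul_sum, hterm]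
  rw [Finset.sum_comm_cycle]
  simp only [← Finset.mul_sum, sum_sum_addChar_mul_eq he _ fun b => f _ (e b), dotAddChar_apply,
    dotProduct_neg]

end HammingCharacters

section HammingWalk

open Polynomial

lemma kap_pos {n d j : ℕ} (hn : 1 < n) (hj : j ≤ d) : 0 < kap n d j :=
  mul_pos (pow_pos (Nat.cast_pos.2 (Nat.sub_pos_of_lt hn)) j) (Nat.cast_pos.2 (Nat.choose_pos hj))

lemma kraw_zero_left (n d s : ℕ) : kraw n d 0 s = 1 := by simp [kraw]

lemma kraw_zero_right (n d j : ℕ) : kraw n d j 0 = kap n d j := by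
  rw [kraw, Finset.sum_range_succ']
  simp [kap]

lemma sum_div_kap_mul_kraw_zero {n d : ℕ} (hn : 1 < n) (w : ℕ → ℝ) :
    ∑ j ∈ Finset.range (d + 1), w j / kap n d j * kraw n d j 0 =
      ∑ j ∈ Finset.range (d + 1), w j := by
  refine Finset.sum_congr rfl fun j hj => ?_
  rw [kraw_zero_right, div_mul_cancel₀ _ (kap_pos hn (Finset.mem_range_succ_iff.1 hj)).ne']

lemma hammingNorm_le_dim {R : Type*} [Zero R] [DecidableEq R] {d : ℕ} (y : Fin d → R) :
    hammingNorm y ≤ d := by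
  simpa using hammingNorm_le_card_fintype (x := y)

lemma hammingNorm_mem_Icc {R : Type*} [Zero R] [DecidableEq R] {d : ℕ} {ξ : Fin d → R}
    (hξ : ξ ≠ 0) :
    hammingNorm ξ ∈ Finset.Icc 1 d :=
  Finset.mem_Icc.2 ⟨hammingNorm_pos_iff.2 hξ, hammingNorm_le_dim ξ⟩

lemma stdAddChar_pow_card {n : ℕ} [NeZero n] (a : ZMod n) : ZMod.stdAddChar a ^ n = 1 := by
  rw [← AddChar.map_nsmul_eq_pow, nsmul_eq_mul, ZMod.natCast_self, zero_mul,
    AddChar.map_zero_eq_one]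

lemma exp_pow_eq_stdAddChar {n : ℕ} [NeZero n] (k : ℕ) :
    Complex.exp (2 * Real.pi * Complex.I / n) ^ k = ZMod.stdAddChar (k : ZMod n) := by
  rw [← Int.cast_natCast k, ZMod.stdAddChar_coe, ← Complex.exp_nat_mul]
  congr 1
  push_cast
  ring

lemma sum_range_natCast_zmod {M : Type*} [AddCommMonoid M] (n : ℕ) [NeZero n] (f : ZMod n → M) :
    ∑ k ∈ Finset.range n, f k = ∑ b, f b := by
  cases n with
  | zero => exact absurd rfl (NeZero.ne 0)
  | succ n =>
    rw [← Fin.sum_univ_eq_sum_range (fun k => f k)]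
    exact Finset.sum_congr rfl fun b _ => congrArg f (Fin.cast_val_eq_self b)

variable {n d : ℕ} {w ρ : ℕ → ℝ}

/-- The amplitude `√(w_{|y|} / κ_{|y|})` of the coin state `y` at time `0`. -/
noncomputable def coinAmplitude (n d : ℕ) (w : ℕ → ℝ) (y : Fin d → ZMod n) : ℂ :=
  (Real.sqrt (w (hammingNorm y) / kap n d (hammingNorm y)) : ℝ)

lemma div_kap_nonneg (hn : 1 < n) (hw : ∀ i ∈ Finset.range (d + 1), 0 ≤ w i)
    (y : Fin d → ZMod n) : 0 ≤ w (hammingNorm y) / kap n d (hammingNorm y) :=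
  div_nonneg (hw _ (Finset.mem_range_succ_iff.2 (hammingNorm_le_dim y)))
    (kap_pos hn (hammingNorm_le_dim y)).le

lemma coinAmplitude_mul_self (hn : 1 < n) (hw : ∀ i ∈ Finset.range (d + 1), 0 ≤ w i)
    (y : Fin d → ZMod n) :
    coinAmplitude n d w y * coinAmplitude n d w y =
      (w (hammingNorm y) / kap n d (hammingNorm y) : ℝ) := by
  rw [coinAmplitude, ← Complex.ofReal_mul, Real.mul_self_sqrt (div_kap_nonneg hn hw y)]

lemma coin_eq_coinAmplitude (hn : 1 < n) (hw : ∀ i ∈ Finset.range (d + 1), 0 ≤ w i)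
    (y y' : Fin d → ZMod n) :
    (coin n d w y y' : ℂ) =
      2 * coinAmplitude n d w y * coinAmplitude n d w y' - if y = y' then 1 else 0 := by
  rw [coin, Real.sqrt_mul (div_kap_nonneg hn hw y), coinAmplitude, coinAmplitude]
  split_ifs <;> push_cast <;> ring

/-- The Fourier component of the walk at a frequency of Hamming weight `j`, as a function of the
value `v` of the corresponding character at `-y`. -/
noncomputable def fourierAmplitude (n : ℕ) (ρ : ℕ → ℝ) (μ : ℕ → Fin n → ℂ) (t j : ℕ) (v : ℂ) : ℂ :=
  if j = 0 then 1
  else ∑ i, 2 * cCoef n (ρ j) (μ j i) * μ j i ^ t / (1 + v * μ j i)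

lemma neg_inv_pow_mul_add_eq_fourierAmplitude {μ : ℕ → Fin n → ℂ} {j : ℕ} {v : ℂ} (hj : j ≠ 0)
    (hone : ∑ i, 2 * cCoef n (ρ j) (μ j i) / (1 + v * μ j i) = 1) (t : ℕ) :
    (-v⁻¹) ^ t * (1 - ∑ i, 2 * cCoef n (ρ j) (μ j i) / (1 + v * μ j i)) +
        ∑ i, 2 * cCoef n (ρ j) (μ j i) * μ j i ^ t / (1 + v * μ j i) =
      fourierAmplitude n ρ μ t j v := by
  rw [hone, sub_self, mul_zero, zero_add, fourierAmplitude, if_neg hj]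

variable [NeZero n]

lemma sum_div_kap_mul_dotAddChar
    (hρ : ∀ i, ρ i = ∑ j ∈ Finset.range (d + 1), w j / kap n d j * kraw n d j i)
    (ξ : Fin d → ZMod n) :
    ∑ y, ((w (hammingNorm y) / kap n d (hammingNorm y) : ℝ) : ℂ) *
        dotAddChar ZMod.stdAddChar ξ y = ρ (hammingNorm ξ) := by
  have htransform := sum_kraw_mul_eq_sum_dotAddChar (ZMod.isPrimitive_stdAddChar n)
    (fun j => ((w j / kap n d j : ℝ) : ℂ)) ξ
  rw [ZMod.card, Fintype.card_fin] at htransform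
  simp only [mul_comm, dotAddChar_comm _ _ ξ] at htransform
  simp only [hρ, Complex.ofReal_sum, Complex.ofReal_mul (_ / _), htransform]

lemma sum_div_kap_mul_dotAddChar_pow (hn : n.Prime)
    (hρ : ∀ i, ρ i = ∑ j ∈ Finset.range (d + 1), w j / kap n d j * kraw n d j i)
    (ξ : Fin d → ZMod n) {k : ℕ} (hk : k ∈ Finset.Icc 1 (n - 1)) :
    ∑ y, ((w (hammingNorm y) / kap n d (hammingNorm y) : ℝ) : ℂ) *
        dotAddChar ZMod.stdAddChar ξ (-y) ^ k = ρ (hammingNorm ξ) := by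
  have := Fact.mk hn
  obtain ⟨hk1, hkn⟩ := Finset.mem_Icc.1 hk
  have hk0 : -(k : ZMod n) ≠ 0 := by
    rw [neg_ne_zero, Ne, ZMod.natCast_eq_zero_iff]
    exact Nat.not_dvd_of_pos_of_lt hk1 (by omega)
  have hpow (y : Fin d → ZMod n) : dotAddChar ZMod.stdAddChar ξ (-y) ^ k =
      dotAddChar ZMod.stdAddChar (-(k : ZMod n) • ξ) y := by
    rw [← AddChar.map_nsmul_eq_pow, dotAddChar_apply, dotAddChar_apply, smul_neg, dotProduct_neg,
      neg_smul, neg_dotProduct, smul_dotProduct, dotProduct_smul, Nat.cast_smul_eq_nsmul]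
  simp only [hpow, sum_div_kap_mul_dotAddChar hρ]
  rw [hammingNorm_smul fun _ => IsSMulRegular.of_ne_zero hk0]

theorem fourierStep_dotAddChar_pow_one (hn : n.Prime)
    (hw : ∀ i ∈ Finset.range (d + 1), 0 ≤ w i) (hsum : ∑ i ∈ Finset.range (d + 1), w i = 1)
    (hρ : ∀ i, ρ i = ∑ j ∈ Finset.range (d + 1), w j / kap n d j * kraw n d j i)
    {μ : ℕ → Fin n → ℂ}
    (hμ : ∀ j ∈ Finset.Icc 1 d, secularPoly n (ρ j : ℂ) = Lagrange.nodal Finset.univ (-μ j))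
    (hinj : ∀ j ∈ Finset.Icc 1 d, Function.Injective (μ j))
    (hpow : ∀ j ∈ Finset.Icc 1 d, ∀ i, (-μ j i) ^ n ≠ 1) (t : ℕ) (ξ y : Fin d → ZMod n) :
    (fourierStep (coinAmplitude n d w * coinAmplitude n d w)
        (dotAddChar ZMod.stdAddChar ξ) ^ t) 1 y =
      fourierAmplitude n ρ μ t (hammingNorm ξ) (dotAddChar ZMod.stdAddChar ξ (-y)) := by
  have htotal : ∑ y, (coinAmplitude n d w * coinAmplitude n d w) y = 1 := by
    have hzero := sum_div_kap_mul_dotAddChar hρ (0 : Fin d → ZMod n)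
    rw [hammingNorm_zero, hρ, sum_div_kap_mul_kraw_zero hn.one_lt, hsum] at hzero
    simpa [coinAmplitude_mul_self hn.one_lt hw, dotAddChar_zero] using hzero
  rcases eq_or_ne ξ 0 with rfl | hξ
  · rw [dotAddChar_zero, Module.End.pow_apply,
      Function.iterate_fixed (fourierStep_one_one htotal)]
    simp [fourierAmplitude]
  · have hj := hammingNorm_mem_Icc hξ
    have hv (y : Fin d → ZMod n) : dotAddChar ZMod.stdAddChar ξ (-y) ^ n = 1 :=
      stdAddChar_pow_card _
    rw [fourierAmplitude, if_neg (hammingNorm_ne_zero_iff.2 hξ)]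
    refine fourierStep_pow_one (fun i y => one_add_mul_ne_zero_of_pow_ne_one (hv y) (hpow _ hj i))
      (fun i => ?_)
      (fun y => sum_cCoef_div_eq_one hn.ne_zero (hμ _ hj) (hinj _ hj) (hpow _ hj) (hv y)) t y
    refine sum_mul_inv_one_add_mul_eq_half hn.ne_zero hv htotal (fun k hk => ?_) (hpow _ hj i)
      (eval_secularPoly_neg_eq_zero (hμ _ hj) i)
    simpa only [Pi.mul_apply, coinAmplitude_mul_self hn.one_lt hw] using
      sum_div_kap_mul_dotAddChar_pow hn hρ ξ hk

theorem walk_eq_sum_fourierAmplitude (hn : n.Prime)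
    (hw : ∀ i ∈ Finset.range (d + 1), 0 ≤ w i) (hsum : ∑ i ∈ Finset.range (d + 1), w i = 1)
    (hρ : ∀ i, ρ i = ∑ j ∈ Finset.range (d + 1), w j / kap n d j * kraw n d j i)
    {μ : ℕ → Fin n → ℂ}
    (hμ : ∀ j ∈ Finset.Icc 1 d, secularPoly n (ρ j : ℂ) = Lagrange.nodal Finset.univ (-μ j))
    (hinj : ∀ j ∈ Finset.Icc 1 d, Function.Injective (μ j))
    (hpow : ∀ j ∈ Finset.Icc 1 d, ∀ i, (-μ j i) ^ n ≠ 1)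
    {ψ : ℕ → (Fin d → ZMod n) → (Fin d → ZMod n) → ℂ}
    (hψ0 : ∀ y x, ψ 0 y x = (if x = 0 then 1 else 0) * coinAmplitude n d w y)
    (hψ : ∀ t y x, ψ (t + 1) y x = ∑ y', (coin n d w y y' : ℂ) * ψ t y' (x + y))
    (t : ℕ) (y x : Fin d → ZMod n) :
    ψ t y x = 1 / (n : ℂ) ^ d * coinAmplitude n d w y *
      ∑ ξ, dotAddChar ZMod.stdAddChar ξ x *
        fourierAmplitude n ρ μ t (hammingNorm ξ) (dotAddChar ZMod.stdAddChar ξ (-y)) := by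
  simp only [coin_eq_coinAmplitude hn.one_lt hw] at hψ
  rw [walk_eq_sum_addChar hψ0 hψ,
    ← (dotAddChar_bijective (ZMod.isPrimitive_stdAddChar n)).sum_comp]
  simp only [fourierStep_dotAddChar_pow_one hn hw hsum hρ hμ hinj hpow,
    mul_left_comm _ (coinAmplitude n d w y), ← Finset.mul_sum, Fintype.card_pi_const, ZMod.card,
    Nat.cast_pow]
  ring

lemma sum_range_sum_range_kraw {η : ℂ} (hη : ∀ k : ℕ, η ^ k = ZMod.stdAddChar (k : ZMod n))
    (f : ℕ → ℂ → ℂ) (hf : ∀ v, f 0 v = 1) (x y : Fin d → ZMod n) :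
    ∑ k ∈ Finset.range n, ∑ l ∈ Finset.range n,
        η ^ (l * k) / n *
          (1 + ∑ j ∈ Finset.Icc 1 d, (kraw n d j (hammingNorm (x + l • y)) : ℂ) * f j (η ^ k)) =
      ∑ ξ, dotAddChar ZMod.stdAddChar ξ x *
        f (hammingNorm ξ) (dotAddChar ZMod.stdAddChar ξ (-y)) := by
  have hinv := sum_sum_addChar_mul_sum_kraw (ZMod.isPrimitive_stdAddChar n) f x y
  simp only [ZMod.card, Fintype.card_fin, sum_range_eq_add_sum_Icc d.succ_ne_zero, kraw_zero_left,
    hf, Complex.ofReal_one, mul_one, Nat.succ_sub_one] at hinv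
  rw [← hinv, ← sum_range_natCast_zmod]
  refine Finset.sum_congr rfl fun k _ => ?_
  rw [← sum_range_natCast_zmod]
  simp only [hη, Nat.cast_mul, Nat.cast_smul_eq_nsmul]

end HammingWalk

/-- Spectral representation of the wave vector, Theorem 5.1:
for the quantum walk on `H(d,n)` with coin built from weights `w`, eigenvalues
`-1/(n-1) < ρ_j < 1` (`j ∈ {1,…,d}`) and pairwise distinct zeros
`μ_j^{(1)},…,μ_j^{(n)}` of `(-z)^n + 2ρ_j Σ_{i=1}^{n-1}(-z)^i + 1`, the wave
vector `ψ_{y,x}(t)` admits the stated spectral representation.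
(The instance `[NeZero n]` is automatic from primality of `n`.) -/
theorem spectral_representation (n d : ℕ) (hn : n.Prime) [NeZero n] (hd : 2 ≤ d) (η : ℂ)
    (hη : η = Complex.exp (2 * Real.pi * Complex.I / n))
    (w : ℕ → ℝ) (hw : ∀ i ∈ Finset.range (d + 1), 0 ≤ w i)
    (hsum : ∑ i ∈ Finset.range (d + 1), w i = 1)
    (ρ : ℕ → ℝ) (hρ : ∀ i, ρ i = ∑ j ∈ Finset.range (d + 1), w j / kap n d j * kraw n d j i)
    (hlo : ∀ j ∈ Finset.Icc 1 d, -(1 / ((n : ℝ) - 1)) < ρ j)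
    (hhi : ∀ j ∈ Finset.Icc 1 d, ρ j < 1)
    (μ : ℕ → Fin n → ℂ)
    (hμ : ∀ j ∈ Finset.Icc 1 d, ∀ z : ℂ,
      (-z) ^ n + 2 * (ρ j : ℂ) * (∑ i ∈ Finset.Icc 1 (n - 1), (-z) ^ i) + 1 =
        (-1 : ℂ) ^ n * ∏ i, (z - μ j i))
    (hdist : ∀ j ∈ Finset.Icc 1 d, Function.Injective (μ j))
    (ψ : ℕ → (Fin d → ZMod n) → (Fin d → ZMod n) → ℂ)
    (hψ0 : ∀ (y x : Fin d → ZMod n), ψ 0 y x =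
      (if x = 0 then 1 else 0) *
        (Real.sqrt (w (hammingNorm y) / kap n d (hammingNorm y)) : ℝ))
    (hψ : ∀ (t : ℕ) (y x : Fin d → ZMod n), ψ (t + 1) y x =
      ∑ y', ((coin n d w y y' : ℝ) : ℂ) * ψ t y' (x + y)) :
    ∀ (t : ℕ) (y x : Fin d → ZMod n), ψ t y x =
      (1 / (n : ℂ) ^ d) *
        (Real.sqrt (w (hammingNorm y) / kap n d (hammingNorm y)) : ℝ) *
        ∑ k ∈ Finset.range n, ∑ l ∈ Finset.range n, (η ^ (l * k) / (n : ℂ)) *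
          (1 + ∑ j ∈ Finset.Icc 1 d, (kraw n d j (hammingNorm (x + l • y)) : ℝ) *
            ((-(η ^ k)⁻¹) ^ t *
                (1 - ∑ i, 2 * cCoef n (ρ j) (μ j i) / (1 + η ^ k * μ j i)) +
              ∑ i, 2 * cCoef n (ρ j) (μ j i) * (μ j i) ^ t / (1 + η ^ k * μ j i))) := by
  have hμ' (j) (hj : j ∈ Finset.Icc 1 d) := secularPoly_eq_nodal_neg (hμ j hj)
  have hpow (j) (hj : j ∈ Finset.Icc 1 d) :=
    neg_pow_ne_one_of_secularPoly_eq_nodal hn.one_lt (hlo j hj) (hhi j hj) (hμ' j hj)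
  have hηpow (k : ℕ) : η ^ k = ZMod.stdAddChar (k : ZMod n) := hη ▸ exp_pow_eq_stdAddChar k
  intro t y x
  rw [walk_eq_sum_fourierAmplitude hn hw hsum hρ hμ' hdist hpow hψ0 hψ, coinAmplitude,
    ← sum_range_sum_range_kraw hηpow _ fun _ => if_pos rfl]
  refine congrArg _ (Finset.sum_congr rfl fun k _ => Finset.sum_congr rfl fun l _ => ?_)
  refine congrArg (fun S => _ * (1 + S)) (Finset.sum_congr rfl fun j hj => ?_)
  have hone := sum_cCoef_div_eq_one hn.ne_zero (hμ' j hj) (hdist j hj) (hpow j hj)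
    (hηpow k ▸ stdAddChar_pow_card _)
  rw [neg_inv_pow_mul_add_eq_fourierAmplitude (Nat.ne_of_gt (Finset.mem_Icc.1 hj).1) hone]
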